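/- For every fixed α > 1 and every ε ∈ (0, 1/2] there exists a constant C > 0 (depending only on α and ε) such that the following holds. Let n, B, B_h ∈ ℕ with n ≥ 2B and ε·B ≤ B_h ≤ B/2, and let δ ∈ [0,1]. Let h : {1,...,n} → {1,...,B−B_h} be truly random (values i.i.d. uniform on {1,...,B−B_h}), and let a_1,...,a_n be {0,1}-valued random variables that are mutually independent and independent of h, satisfying Pr[a_j = 1] ≤ δ for every j ∈ {1,...,B_h}. Define f̃_i = 1/i^α if a_i = 0, and f̃_i = Σ_{j=1}^n a_j·1[h(j)=h(i)]·(1/j^α) if a_i = 1. Then (1/N)·Σ_{i=1}^n (1/i^α)·E[|f̃_i − 1/i^α|] ≤ C·(δ + B^{1−α})²/B, where N = Σ_{i=1}^n 1/i^α. -/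

import Mathlib

/-- Expectation of a real-valued random variable on a finite probability space
with the uniform distribution. -/
noncomputable def expUnif {Ω : Type*} [Fintype Ω] (X : Ω → ℝ) : ℝ :=
  (∑ ω : Ω, X ω) / (Fintype.card Ω : ℝ)

/-- Generalized Zipfian frequency with exponent `α` of the item indexed by
`i : Fin n` (representing item `i+1`): `1/(i+1)^α`. -/
noncomputable def zipfGen (α : ℝ) {n : ℕ} (i : Fin n) : ℝ :=
  ((i : ℝ) + 1) ^ (-α)

/-- Expectation over mutually independent classification bits `a : Fin n → Bool`
(with `Pr[a_j = 1] = p j`) together with an independent uniformly random hash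
function `h : Fin n → Fin m`. -/
noncomputable def noisyExpCM {n m : ℕ} (p : Fin n → ℝ)
    (X : (Fin n → Bool) → (Fin n → Fin m) → ℝ) : ℝ :=
  ∑ a : Fin n → Bool,
    (∏ j : Fin n, if a j then p j else 1 - p j) *
      expUnif (fun h : Fin n → Fin m => X a h)

/-! An item's estimate is wrong only when it is classified as non-heavy, and then by the total
frequency of the other non-heavy items in its bucket. With `m` buckets, independence gives each
ordered pair `i ≠ j` the contribution `f i * f j * p i * p j / m`, so the query-weighted error is at
most `(∑ i, f i * p i) ^ 2 / (m * ∑ i, f i)`. For Zipfian frequencies `∑ i, f i ≥ 1`, while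
`∑ i, f i * p i` is `O(δ)` from the heavy items, as the frequencies are summable, plus a tail
`O(Bh ^ (1 - α))` by comparison with an integral. -/

/-- The estimate `f̃ i` of the frequency `f i` made by learned Count-Min when the items with
`a j = true` are hashed by `h` and the others are counted exactly. -/
noncomputable def learnedEstimate {ι κ : Type*} [Fintype ι] [DecidableEq κ] (f : ι → ℝ)
    (a : ι → Bool) (h : ι → κ) (i : ι) : ℝ :=
  if a i then ∑ j, if a j = true ∧ h j = h i then f j else 0 else f i

/-- The expected query-weighted error of learned Count-Min with `m` hash buckets on the frequencies
`f`, when item `j` is classified as non-heavy with probability `p j`. -/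
noncomputable def learnedError {n : ℕ} (m : ℕ) (f p : Fin n → ℝ) : ℝ :=
  (1 / ∑ i, f i) *
    ∑ i, f i * noisyExpCM (m := m) p fun a h => |learnedEstimate f a h i - f i|

section Expectation

lemma expUnif_sum {Ω ι : Type*} [Fintype Ω] (s : Finset ι) (X : ι → Ω → ℝ) :
    expUnif (fun ω => ∑ j ∈ s, X j ω) = ∑ j ∈ s, expUnif (X j) := by
  simp only [expUnif]
  rw [Finset.sum_comm, Finset.sum_div]

lemma expUnif_const_mul {Ω : Type*} [Fintype Ω] (c : ℝ) (X : Ω → ℝ) :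
    expUnif (fun ω => c * X ω) = c * expUnif X := by
  simp only [expUnif]
  rw [← Finset.mul_sum, mul_div_assoc]

lemma noisyExpCM_sum {n m : ℕ} {ι : Type*} (p : Fin n → ℝ) (s : Finset ι)
    (X : ι → (Fin n → Bool) → (Fin n → Fin m) → ℝ) :
    noisyExpCM p (fun a h => ∑ j ∈ s, X j a h) = ∑ j ∈ s, noisyExpCM p (X j) := by
  simp only [noisyExpCM, expUnif_sum, Finset.mul_sum]
  exact Finset.sum_comm

lemma noisyExpCM_mul {n m : ℕ} (p : Fin n → ℝ) (Y : (Fin n → Bool) → ℝ)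
    (Z : (Fin n → Fin m) → ℝ) :
    noisyExpCM p (fun a h => Y a * Z h) =
      (∑ a, (∏ k, if a k then p k else 1 - p k) * Y a) * expUnif Z := by
  simp only [noisyExpCM, expUnif_const_mul, Finset.sum_mul, mul_assoc]

lemma sum_prod_bernoulli_mul_ite_forall {ι R : Type*} [Fintype ι] [DecidableEq ι] [CommRing R]
    (p : ι → R) (s : Finset ι) :
    ∑ a : ι → Bool, (∏ k, if a k then p k else 1 - p k) *
      (if ∀ k ∈ s, a k = true then 1 else 0) = ∏ k ∈ s, p k := by
  have factor_weight (a : ι → Bool) :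
      (∏ k, if a k then p k else 1 - p k) * (if ∀ k ∈ s, a k = true then 1 else 0) =
        ∏ k, (if a k then p k else 1 - p k) * if k ∈ s then (if a k then 1 else 0) else 1 := by
    simp only [Finset.prod_mul_distrib, Fintype.prod_ite_mem, Finset.prod_ite_zero,
      Finset.prod_const_one]
  have sum_factor (k : ι) :
      ∑ b : Bool, (if b then p k else 1 - p k) * (if k ∈ s then (if b then 1 else 0) else 1) =
        if k ∈ s then p k else 1 := by
    by_cases hk : k ∈ s <;> simp [hk]
  simp only [factor_weight]
  rw [← Fintype.prod_sum fun k (b : Bool) =>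
    (if b then p k else 1 - p k) * if k ∈ s then (if b then 1 else 0) else 1]
  simp only [sum_factor, Fintype.prod_ite_mem]

lemma expUnif_collision {ι κ : Type*} [Fintype ι] [DecidableEq ι] [Fintype κ] [DecidableEq κ]
    [Nonempty κ] {i j : ι} (hij : i ≠ j) :
    expUnif (fun h : ι → κ => if h j = h i then 1 else 0) = 1 / Fintype.card κ := by
  -- Conditionally on all values of `h` other than `h j`, exactly one value of `h j` collides.
  have count_collisions : ∑ h : ι → κ, (if h j = h i then (1 : ℝ) else 0) =
      Fintype.card ({k // k ≠ j} → κ) := by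
    rw [Fintype.sum_equiv (Equiv.funSplitAt j κ) (fun h => if h j = h i then (1 : ℝ) else 0)
      (fun x => if x.1 = x.2 ⟨i, hij⟩ then 1 else 0) fun _ => rfl, Fintype.sum_prod_type_right]
    simp
  have card_split : Fintype.card (ι → κ) = Fintype.card κ * Fintype.card ({k // k ≠ j} → κ) := by
    rw [Fintype.card_congr (Equiv.funSplitAt j κ), Fintype.card_prod]
  rw [expUnif, count_collisions, card_split, Nat.cast_mul, div_mul_cancel_right₀ (by positivity),
    one_div]

end Expectation

section Error

lemma abs_learnedEstimate_sub {ι κ : Type*} [Fintype ι] [DecidableEq ι] [DecidableEq κ]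
    {f : ι → ℝ} (hf : ∀ i, 0 ≤ f i) (a : ι → Bool) (h : ι → κ) (i : ι) :
    |learnedEstimate f a h i - f i| = ∑ j ∈ Finset.univ.erase i,
      (if ∀ k ∈ ({i, j} : Finset ι), a k = true then 1 else 0) *
        (f j * if h j = h i then 1 else 0) := by
  by_cases hai : a i = true
  · have error_eq : learnedEstimate f a h i - f i =
        ∑ j ∈ Finset.univ.erase i, if a j = true ∧ h j = h i then f j else 0 := by
      rw [learnedEstimate, if_pos hai, ← Finset.add_sum_erase _ _ (Finset.mem_univ i),
        if_pos ⟨hai, rfl⟩, add_sub_cancel_left]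
    rw [error_eq, abs_of_nonneg (Finset.sum_nonneg fun j _ => ite_nonneg (hf j) le_rfl)]
    refine Finset.sum_congr rfl fun j _ => ?_
    by_cases haj : a j = true <;> simp [hai, haj]
  · simp [learnedEstimate, hai]

lemma noisyExpCM_abs_learnedEstimate_sub {n m : ℕ} [NeZero m] (p : Fin n → ℝ) {f : Fin n → ℝ}
    (hf : ∀ i, 0 ≤ f i) (i : Fin n) :
    noisyExpCM (m := m) p (fun a h => |learnedEstimate f a h i - f i|) =
      ∑ j ∈ Finset.univ.erase i, p i * p j * (f j * (1 / m)) := by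
  simp only [abs_learnedEstimate_sub hf, noisyExpCM_sum]
  refine Finset.sum_congr rfl fun j hj => ?_
  have hij : i ≠ j := (Finset.ne_of_mem_erase hj).symm
  rw [noisyExpCM_mul, sum_prod_bernoulli_mul_ite_forall, Finset.prod_pair hij,
    expUnif_const_mul, expUnif_collision hij, Fintype.card_fin]

lemma learnedError_le {n m : ℕ} [NeZero m] {f p : Fin n → ℝ} (hf : ∀ i, 0 ≤ f i)
    (hp : ∀ i, 0 ≤ p i) :
    learnedError m f p ≤ (1 / ∑ i, f i) * ((∑ i, f i * p i) ^ 2 / m) := by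
  refine mul_le_mul_of_nonneg_left ?_ (one_div_nonneg.2 (Finset.sum_nonneg fun i _ => hf i))
  simp only [noisyExpCM_abs_learnedEstimate_sub p hf]
  calc ∑ i, f i * ∑ j ∈ Finset.univ.erase i, p i * p j * (f j * (1 / m))
      ≤ ∑ i, f i * ∑ j, p i * p j * (f j * (1 / m)) := by
        gcongr with i
        · exact hf i
        · exact fun j _ _ => mul_nonneg (mul_nonneg (hp i) (hp j))
            (mul_nonneg (hf j) (by positivity))
        · exact Finset.erase_subset _ _
    _ = (∑ i, f i * p i) ^ 2 / m := by
        rw [sq, Finset.sum_mul_sum]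
        simp only [Finset.mul_sum, Finset.sum_div]
        exact Finset.sum_congr rfl fun i _ => Finset.sum_congr rfl fun j _ => by ring

end Error

section Zipf

variable {α : ℝ}

lemma zipfGen_nonneg {n : ℕ} (i : Fin n) : 0 ≤ zipfGen α i := by
  unfold zipfGen
  positivity

lemma one_le_sum_zipfGen {n : ℕ} [NeZero n] : 1 ≤ ∑ i : Fin n, zipfGen α i := by
  have first_le := Finset.single_le_sum (fun i _ => zipfGen_nonneg (α := α) i)
    (Finset.mem_univ (0 : Fin n))
  simpa [zipfGen] using first_le

lemma sum_Ico_rpow_neg_le (hα : 1 < α) {b : ℕ} (hb : 0 < b) (n : ℕ) :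
    ∑ k ∈ Finset.Ico b n, ((k : ℝ) + 1) ^ (-α) ≤ (b : ℝ) ^ (1 - α) / (α - 1) := by
  have : 0 < α - 1 := sub_pos.2 hα
  obtain hnb | hbn := le_total n b
  · rw [Finset.Ico_eq_empty_of_le hnb, Finset.sum_empty]
    positivity
  have hb' : (0 : ℝ) < b := Nat.cast_pos.2 hb
  have hbn' : (b : ℝ) ≤ n := Nat.cast_le.2 hbn
  have antitone : AntitoneOn (fun x : ℝ => x ^ (-α)) (Set.Icc b n) :=
    (Real.antitoneOn_rpow_Ioi_of_exponent_nonpos (by linarith)).mono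
      fun x hx => hb'.trans_le hx.1
  calc ∑ k ∈ Finset.Ico b n, ((k : ℝ) + 1) ^ (-α)
      ≤ ∫ x in (b : ℝ)..n, x ^ (-α) := by
        simpa only [Nat.cast_add_one] using antitone.sum_le_integral_Ico hbn
    _ = ((b : ℝ) ^ (1 - α) - (n : ℝ) ^ (1 - α)) / (α - 1) := by
        rw [integral_rpow (Or.inr ⟨by linarith, by
          rw [Set.uIcc_of_le hbn']; exact fun h => hb'.not_ge h.1⟩),
          ← neg_div_neg_eq, neg_sub, neg_add', neg_neg, neg_add_eq_sub]
    _ ≤ (b : ℝ) ^ (1 - α) / (α - 1) := by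
        gcongr
        exact sub_le_self _ (by positivity)

lemma sum_zipfGen_tail_le (hα : 1 < α) (n : ℕ) {b : ℕ} (hb : 0 < b) :
    ∑ i : Fin n with b ≤ i.val, zipfGen α i ≤ (b : ℝ) ^ (1 - α) / (α - 1) := by
  have filter_range : {k ∈ Finset.range n | b ≤ k} = Finset.Ico b n := by grind
  rw [Finset.sum_filter]
  simp only [zipfGen]
  rw [Fin.sum_univ_eq_sum_range fun k => if b ≤ k then ((k : ℝ) + 1) ^ (-α) else 0,
    ← Finset.sum_filter, filter_range]
  exact sum_Ico_rpow_neg_le hα hb n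

lemma sum_zipfGen_le (hα : 1 < α) (n : ℕ) : ∑ i : Fin n, zipfGen α i ≤ α / (α - 1) := by
  have : 0 < α - 1 := sub_pos.2 hα
  cases n with
  | zero => simpa using (by positivity : 0 ≤ α / (α - 1))
  | succ n =>
    have tail_le := sum_Ico_rpow_neg_le hα one_pos (n + 1)
    rw [Nat.cast_one, Real.one_rpow] at tail_le
    simp only [zipfGen]
    rw [Fin.sum_univ_eq_sum_range fun k => ((k : ℝ) + 1) ^ (-α), Finset.range_eq_Ico,
      Finset.sum_eq_sum_Ico_succ_bot n.succ_pos]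
    calc (((0 : ℕ) : ℝ) + 1) ^ (-α) + ∑ k ∈ Finset.Ico 1 (n + 1), ((k : ℝ) + 1) ^ (-α)
        ≤ 1 + 1 / (α - 1) := by simpa using tail_le
      _ = α / (α - 1) := by field_simp; ring

lemma sum_zipfGen_mul_le (hα : 1 < α) {n b : ℕ} (hb : 0 < b) {δ : ℝ} (hδ : 0 ≤ δ)
    {p : Fin n → ℝ} (hp : ∀ j, p j ≤ 1) (hpδ : ∀ j : Fin n, (j : ℕ) < b → p j ≤ δ) :
    ∑ i, zipfGen α i * p i ≤ α / (α - 1) * (δ + (b : ℝ) ^ (1 - α)) := by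
  have : 0 < α - 1 := sub_pos.2 hα
  have term_le (i : Fin n) :
      zipfGen α i * p i ≤ zipfGen α i * δ + if b ≤ i.val then zipfGen α i else 0 := by
    have hf := zipfGen_nonneg (α := α) i
    split_ifs with hi
    · exact (mul_le_of_le_one_right hf (hp i)).trans (le_add_of_nonneg_left (by positivity))
    · simpa using mul_le_mul_of_nonneg_left (hpδ i (not_le.1 hi)) hf
  calc ∑ i, zipfGen α i * p i
      ≤ (∑ i, zipfGen α i) * δ + ∑ i : Fin n with b ≤ i.val, zipfGen α i := by
        rw [Finset.sum_mul, Finset.sum_filter, ← Finset.sum_add_distrib]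
        exact Finset.sum_le_sum fun i _ => term_le i
    _ ≤ α / (α - 1) * δ + α / (α - 1) * (b : ℝ) ^ (1 - α) := by
        gcongr
        · exact sum_zipfGen_le hα n
        · refine (sum_zipfGen_tail_le hα n hb).trans ?_
          rw [div_mul_eq_mul_div]
          gcongr
          exact le_mul_of_one_le_left (by positivity) hα.le
    _ = α / (α - 1) * (δ + (b : ℝ) ^ (1 - α)) := by ring

end Zipf

lemma learnedError_zipfGen_le {α : ℝ} (hα : 1 < α) {n m b : ℕ} [NeZero n] [NeZero m] (hb : 0 < b)
    {δ : ℝ} (hδ : 0 ≤ δ) {p : Fin n → ℝ} (hp0 : ∀ j, 0 ≤ p j) (hp1 : ∀ j, p j ≤ 1)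
    (hpδ : ∀ j : Fin n, (j : ℕ) < b → p j ≤ δ) :
    learnedError m (zipfGen α) p ≤ (α / (α - 1) * (δ + (b : ℝ) ^ (1 - α))) ^ 2 / m := by
  have sum_nonneg : 0 ≤ ∑ i, zipfGen α i * p i :=
    Finset.sum_nonneg fun i _ => mul_nonneg (zipfGen_nonneg i) (hp0 i)
  calc learnedError m (zipfGen α) p
      ≤ (1 / ∑ i : Fin n, zipfGen α i) * ((∑ i, zipfGen α i * p i) ^ 2 / m) :=
        learnedError_le zipfGen_nonneg hp0
    _ ≤ (∑ i, zipfGen α i * p i) ^ 2 / m :=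
        mul_le_of_le_one_left (by positivity)
          (div_le_one_of_le₀ one_le_sum_zipfGen (zero_le_one.trans one_le_sum_zipfGen))
    _ ≤ (α / (α - 1) * (δ + (b : ℝ) ^ (1 - α))) ^ 2 / m := by
        gcongr
        exact sum_zipfGen_mul_le hα hb hδ hp1 hpδ

lemma add_rpow_le_of_mul_le {ε r x y δ : ℝ} (hε : 0 < ε) (hr : r ≤ 0) (hx : 0 < x) (hδ : 0 ≤ δ)
    (hxy : ε * x ≤ y) : δ + y ^ r ≤ (1 + ε ^ r) * (δ + x ^ r) := by
  have rpow_le : y ^ r ≤ ε ^ r * x ^ r := by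
    rw [← Real.mul_rpow hε.le hx.le]
    exact Real.rpow_le_rpow_of_nonpos (by positivity) hxy hr
  have cross_nonneg : 0 ≤ ε ^ r * δ + x ^ r := by positivity
  linarith

-- There is no `h : Fin n → Fin 0` for `0 < n`, and `expUnif` divides by zero.
lemma learnedError_zero_buckets {n : ℕ} (f p : Fin n → ℝ) : learnedError 0 f p = 0 := by
  refine mul_eq_zero_of_right _ (Finset.sum_eq_zero fun i _ => ?_)
  have : IsEmpty (Fin n → Fin 0) := ⟨fun h => (h i).elim0⟩
  simp [noisyExpCM, expUnif]

theorem learned_countMin_noisy_oracle_general {α : ℝ} (hα : 1 < α) {ε : ℝ} (hε : 0 < ε) :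
    ∃ C : ℝ, 0 < C ∧ ∀ n B Bh : ℕ, Bh ≤ n → ε * (B : ℝ) ≤ (Bh : ℝ) → 2 * Bh ≤ B →
      ∀ δ : ℝ, 0 ≤ δ → ∀ p : Fin n → ℝ, (∀ j, 0 ≤ p j) → (∀ j, p j ≤ 1) →
        (∀ j : Fin n, (j : ℕ) < Bh → p j ≤ δ) →
          learnedError (B - Bh) (zipfGen α) p ≤ C * (δ + (B : ℝ) ^ (1 - α)) ^ 2 / (B : ℝ) := by
  have : 0 < α - 1 := sub_pos.2 hα
  set K : ℝ := α / (α - 1) * (1 + ε ^ (1 - α)) with hK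
  refine ⟨2 * K ^ 2, by positivity, fun n B Bh hBhn hεB hBhB δ hδ p hp0 hp1 hpδ => ?_⟩
  obtain rfl | hB := B.eq_zero_or_pos
  · simp [learnedError_zero_buckets]
  have hB' : (0 : ℝ) < B := Nat.cast_pos.2 hB
  have hBh : 0 < Bh := Nat.cast_pos.1 ((mul_pos hε hB').trans_le hεB)
  have : NeZero n := ⟨by lia⟩
  have : NeZero (B - Bh) := ⟨by lia⟩
  have half_le_buckets : (B : ℝ) / 2 ≤ (B - Bh : ℕ) := by
    rw [div_le_iff₀ two_pos]
    exact_mod_cast (by lia : B ≤ (B - Bh) * 2)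
  calc learnedError (B - Bh) (zipfGen α) p
      ≤ (α / (α - 1) * (δ + (Bh : ℝ) ^ (1 - α))) ^ 2 / (B - Bh : ℕ) :=
        learnedError_zipfGen_le hα hBh hδ hp0 hp1 hpδ
    _ ≤ (α / (α - 1) * ((1 + ε ^ (1 - α)) * (δ + (B : ℝ) ^ (1 - α)))) ^ 2 / (B / 2) := by
        gcongr
        exact add_rpow_le_of_mul_le hε (by linarith) hB' hδ hεB
    _ = 2 * K ^ 2 * (δ + (B : ℝ) ^ (1 - α)) ^ 2 / B := by rw [hK]; ring

/-- learned Count-Min on Zipfian input with exponent `α > 1`,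
using a noisy heavy hitter oracle that misclassifies each of the `Bh` heavy items
with probability at most `δ`, incurs expected (query-weighted) error
`O((δ + B^{1-α})²/B)`. -/
theorem learned_countMin_noisy_oracle :
    ∀ α : ℝ, 1 < α →
      ∀ ε : ℝ, 0 < ε → ε ≤ 1 / 2 →
        ∃ C : ℝ, 0 < C ∧
          ∀ n B Bh : ℕ, 2 * B ≤ n → ε * (B : ℝ) ≤ (Bh : ℝ) → 2 * Bh ≤ B →
            ∀ δ : ℝ, 0 ≤ δ → δ ≤ 1 →
              ∀ p : Fin n → ℝ, (∀ j, 0 ≤ p j) → (∀ j, p j ≤ 1) →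
                (∀ j : Fin n, (j : ℕ) < Bh → p j ≤ δ) →
                (1 / ∑ i : Fin n, zipfGen α i) *
                    (∑ i : Fin n, zipfGen α i *
                      noisyExpCM (m := B - Bh) p (fun a h =>
                        |(if a i then
                            ∑ j : Fin n,
                              if a j = true ∧ h j = h i then zipfGen α j else 0
                          else zipfGen α i) - zipfGen α i|)) ≤
                  C * (δ + (B : ℝ) ^ (1 - α)) ^ 2 / (B : ℝ) := by
  intro α hα ε hε _
  obtain ⟨C, hC, error_le⟩ := learned_countMin_noisy_oracle_general hα hε
  exact ⟨C, hC, fun n B Bh hn hεB hBhB δ hδ _ =>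
    error_le n B Bh (by lia) hεB hBhB δ hδ⟩
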